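/- arXiv:1706.05589 — 4 statements merged into one kernel-verified Lean document; each statement's English description precedes it below -/
import Mathlib

section
/- (Berger–Klosin–Kramer, restated as Theorem 2.1 of the paper.) Assume that the residue field F_ϖ of O has at least s elements (equivalently #F_ϖ^× ≥ s−1) and that each ideal J_i ⊆ T_i is principal. Then the cardinality of the product of quotients satisfies #(∏_{i=1}^s T_i/J_i) ≥ #(T/J). Moreover, equality holds if and only if the ideal J ⊆ T is principal. -/
/-!
Setting: `O` is the valuation ring of a finite extension of `ℚ_p`, abstracted as a complete
discrete valuation ring with finite residue field of characteristic `p`.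
`A = ∏ i, O^(n i)`, `T ⊆ A` a local complete `O`-subalgebra of full rank (`A/T` finite),
`J ⊆ T` an ideal of finite index, `T_i = φ_i(T)`, `J_i = φ_i(J)`.
-/

open IsLocalRing

set_option synthInstance.maxHeartbeats 1000000
set_option maxHeartbeats 1000000

noncomputable section

namespace Stmt0

variable (p : ℕ) [Fact (Nat.Prime p)]
variable (O : Type) [CommRing O] [IsDomain O] [IsDiscreteValuationRing O]
variable (s : ℕ) (n : Fin s → ℕ)

/-- The ambient algebra `A = ∏_{i=1}^s O^{n_i}`. -/
abbrev A : Type := ∀ i : Fin s, Fin (n i) → O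

/-- The canonical projection `φ_i : A → A_i = O^{n_i}`. -/
def φ (i : Fin s) : A O s n →ₐ[O] (Fin (n i) → O) :=
  Pi.evalAlgHom O (fun i => Fin (n i) → O) i

variable (T : Subalgebra O (A O s n))

/-- `T_i = φ_i(T)`. -/
def Ti (i : Fin s) : Subalgebra O (Fin (n i) → O) := T.map (φ O s n i)

/-- The projection `T → T_i` induced by `φ_i`. -/
def ψ (i : Fin s) : T →ₐ[O] Ti O s n T i :=
  AlgHom.codRestrict ((φ O s n i).comp T.val) (Ti O s n T i)
    (fun x => ⟨x.1, x.2, rfl⟩)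

/-- `J_i = φ_i(J)`, as an ideal of `T_i`. -/
def Ji (J : Ideal T) (i : Fin s) : Ideal (Ti O s n T i) :=
  J.map (ψ O s n T i)

lemma exists_not_mem_all {R M ι : Type*} [CommRing R] [IsLocalRing R] [AddCommGroup M] [Module R M]
    [Finite (ResidueField R)] (K : ι → Submodule R M) (hK : ∀ i, K i ≠ ⊤) (S : Finset ι)
    (hS : S.card ≤ Nat.card (ResidueField R)) : ∃ x : M, ∀ i ∈ S, x ∉ K i := by
  classical
  induction S using Finset.induction_on with
  | empty => exact ⟨0, by simp⟩
  | insert k S hk ih =>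
    rw [Finset.card_insert_of_notMem hk] at hS
    obtain ⟨x, hx⟩ := ih (by omega)
    by_cases hxk : x ∈ K k
    swap
    · refine ⟨x, fun i hi => ?_⟩
      rcases Finset.mem_insert.1 hi with rfl | hi
      · exact hxk
      · exact hx i hi
    obtain ⟨y, hy⟩ : ∃ y, y ∉ K k := by
      by_contra! h
      exact hK k (eq_top_iff.2 fun z _ => h z)
    let P : ι → ResidueField R → Prop := fun i c => ∃ r : R, residue R r = c ∧ y + r • x ∈ K i
    let f : ι → ResidueField R := fun i => if h : ∃ c, P i c then h.choose else 0
    have huniq : ∀ i ∈ S, ∀ c, P i c → c = f i := by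
      intro i hi c hc
      have hex : ∃ c, P i c := ⟨c, hc⟩
      have hf : f i = hex.choose := dif_pos hex
      have hP : P i (f i) := hf ▸ hex.choose_spec
      obtain ⟨r, hr, hr'⟩ := hc
      obtain ⟨t, ht, ht'⟩ := hP
      by_contra hne
      have hu : IsUnit (r - t) := by
        by_contra hnu
        have : residue R (r - t) = 0 := (residue_eq_zero_iff _).2 ((mem_maximalIdeal _).2 hnu)
        rw [map_sub, hr, ht] at this
        exact hne (sub_eq_zero.1 this)
      have hmem : (r - t) • x ∈ K i := by
        have := (K i).sub_mem hr' ht'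
        rwa [add_sub_add_left_eq_sub, ← sub_smul] at this
      obtain ⟨u, hu⟩ := hu
      apply hx i hi
      have := (K i).smul_mem (↑u⁻¹ : R) hmem
      rwa [← hu, smul_smul, Units.inv_mul, one_smul] at this
    have := Fintype.ofFinite (ResidueField R)
    obtain ⟨c, hc⟩ : ∃ c, c ∉ S.image f := by
      by_contra! h
      have h1 : S.image f = Finset.univ := Finset.eq_univ_iff_forall.2 h
      have h2 := Finset.card_image_le (s := S) (f := f)
      rw [h1, Finset.card_univ, ← Nat.card_eq_fintype_card] at h2
      omega
    obtain ⟨r, rfl⟩ := residue_surjective c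
    refine ⟨y + r • x, fun i hi => ?_⟩
    rcases Finset.mem_insert.1 hi with rfl | hi
    · intro h
      exact hy (((K i).add_mem_iff_left ((K i).smul_mem r hxk)).1 h)
    · intro h
      exact hc (Finset.mem_image.2 ⟨i, hi, (huniq i hi _ ⟨r, rfl, h⟩).symm⟩)

lemma index_map_eq {M N : Type*} [AddCommGroup M] [AddCommGroup N] (ι : N →+ M)
    (hι : Function.Injective ι) (hfin : ι.range.index ≠ 0) (f : M →+ M)
    (hf : Function.Injective f) (g : N →+ N) (hfg : ∀ x, ι (g x) = f (ι x)) :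
    g.range.index = f.range.index := by
  have h1 := AddSubgroup.index_map_of_injective g.range hι
  have h2 := AddSubgroup.index_map_of_injective ι.range hf
  have h3 : g.range.map ι = ι.range.map f := by
    rw [AddMonoidHom.map_range, AddMonoidHom.map_range]
    congr 1
    ext x
    exact hfg x
  rw [h3, h2, mul_comm] at h1
  exact (Nat.eq_of_mul_eq_mul_right (Nat.pos_of_ne_zero hfin) h1).symm

lemma psi_surj (i : Fin s) : Function.Surjective (ψ O s n T i) := by
  rintro ⟨_, x, hx, rfl⟩
  exact ⟨⟨x, hx⟩, rfl⟩

lemma psi_apply (i : Fin s) (x : T) : ((ψ O s n T i x : Ti O s n T i) : Fin (n i) → O) = x.1 i :=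
  rfl

lemma infinite_O : Infinite O := by
  by_contra h
  rw [not_infinite_iff_finite] at h
  exact IsDiscreteValuationRing.not_isField O (Finite.isField_of_domain O)

lemma exists_coord_ne (J : Ideal T) (hJ : Finite (T ⧸ J)) (i : Fin s) (k : Fin (n i)) :
    ∃ x ∈ J, x.1 i k ≠ 0 := by
  by_contra! h
  let c : T →+* O := ((Pi.evalRingHom (fun _ => O) k).comp
    (Pi.evalRingHom (fun i => Fin (n i) → O) i)).comp T.val.toRingHom
  have hc : Function.Surjective (Ideal.Quotient.lift J c (fun a ha => h a ha)) := by
    intro r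
    exact ⟨Ideal.Quotient.mk J (algebraMap O T r), rfl⟩
  have := infinite_O O
  have := Finite.of_surjective _ hc
  exact not_finite O

lemma coord_ne (J : Ideal T) (hJ : Finite (T ⧸ J)) (β : T)
    (hβ : ∀ i, Ji O s n T J i = Ideal.span {ψ O s n T i β}) (i : Fin s) (k : Fin (n i)) :
    β.1 i k ≠ 0 := by
  obtain ⟨x, hx, hxne⟩ := exists_coord_ne O s n T J hJ i k
  intro h0
  have : ψ O s n T i x ∈ Ji O s n T J i := Ideal.mem_map_of_mem _ hx
  rw [hβ, Ideal.mem_span_singleton'] at this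
  obtain ⟨a, ha⟩ := this
  apply hxne
  have := congrFun (congrArg Subtype.val ha) k
  rw [psi_apply] at this
  rw [← this]
  simp [psi_apply, h0]

lemma index_pi {ι : Type} (R : ι → Type) [∀ i, CommRing (R i)] (I : ∀ i, Ideal (R i))
    (b : ∀ i, R i) (hI : ∀ i, I i = Ideal.span {b i}) :
    (AddMonoidHom.mulLeft b).range.index = Nat.card (∀ i, R i ⧸ I i) := by
  let q : (∀ i, R i) →+ (∀ i, R i ⧸ I i) :=
    AddMonoidHom.mk' (fun x i => Ideal.Quotient.mk (I i) (x i))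
      (by intro a b; ext i; exact map_add _ _ _)
  have hq : Function.Surjective q := by
    intro y
    choose x hx using fun i => Ideal.Quotient.mk_surjective (y i)
    exact ⟨x, funext hx⟩
  have hfr : (AddMonoidHom.mulLeft b).range = q.ker := by
    ext y
    constructor
    · rintro ⟨x, rfl⟩
      rw [AddMonoidHom.mem_ker]
      ext i
      apply Ideal.Quotient.eq_zero_iff_mem.2
      rw [hI]
      exact Ideal.mem_span_singleton'.2 ⟨x i, mul_comm _ _⟩
    · intro hy
      have : ∀ i, ∃ a, b i * a = y i := by
        intro i
        have h : y i ∈ I i := Ideal.Quotient.eq_zero_iff_mem.1 (congrFun hy i)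
        rw [hI, Ideal.mem_span_singleton'] at h
        obtain ⟨a, ha⟩ := h
        exact ⟨a, by rw [mul_comm, ha]⟩
      choose a ha using this
      exact ⟨a, funext ha⟩
  rw [hfr]
  exact Nat.card_congr (QuotientAddGroup.quotientKerEquivOfSurjective q hq).toEquiv

lemma index_single {R : Type} [CommRing R] (b : R) :
    (AddMonoidHom.mulLeft b).range.index = Nat.card (R ⧸ Ideal.span {b}) := by
  have hgr : (AddMonoidHom.mulLeft b).range = (Ideal.span {b} : Ideal R).toAddSubgroup := by
    ext y
    constructor
    · rintro ⟨x, rfl⟩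
      exact Ideal.mem_span_singleton'.2 ⟨x, mul_comm _ _⟩
    · intro hy
      obtain ⟨a, ha⟩ := Ideal.mem_span_singleton'.1 hy
      exact ⟨a, by rw [← ha, mul_comm]; rfl⟩
  rw [hgr]
  rfl

lemma card_eq (hfullrank : Finite ((A O s n) ⧸ T.toSubmodule))
    (J : Ideal T) (hJ : Finite (T ⧸ J)) (β : T)
    (hβ : ∀ i, Ji O s n T J i = Ideal.span {ψ O s n T i β}) :
    Nat.card (∀ i, Ti O s n T i ⧸ Ji O s n T J i) = Nat.card (T ⧸ Ideal.span {β}) := by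
  let ι : T →+ (∀ i, Ti O s n T i) :=
    AddMonoidHom.mk' (fun x i => ψ O s n T i x) (by intro a b; ext i; simp)
  let e : (∀ i, Ti O s n T i) →+ A O s n :=
    AddMonoidHom.mk' (fun x i => (x i : Fin (n i) → O)) (by intro a b; rfl)
  let f : (∀ i, Ti O s n T i) →+ (∀ i, Ti O s n T i) := AddMonoidHom.mulLeft (ι β)
  let g : T →+ T := AddMonoidHom.mulLeft β
  have hι : Function.Injective ι := by
    intro x y h
    ext i k
    exact congrFun (congrArg Subtype.val (congrFun h i)) k
  have hfin : ι.range.index ≠ 0 := by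
    have h1 : ι.range = T.toSubmodule.toAddSubgroup.comap e := by
      ext y
      constructor
      · rintro ⟨x, rfl⟩
        exact x.2
      · intro hy
        exact ⟨⟨e y, hy⟩, rfl⟩
    rw [h1, AddSubgroup.index_comap]
    have h2 : T.toSubmodule.toAddSubgroup.index ≠ 0 := by
      have : Finite ((A O s n) ⧸ T.toSubmodule.toAddSubgroup) := hfullrank
      exact AddSubgroup.index_ne_zero_of_finite
    have h3 := AddSubgroup.relIndex_dvd_index_of_normal T.toSubmodule.toAddSubgroup e.range
    exact fun h => h2 (Nat.eq_zero_of_zero_dvd (h ▸ h3))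
  have hf : Function.Injective f := by
    intro x y h
    ext i k
    have := congrFun (congrArg Subtype.val (congrFun h i)) k
    exact mul_left_cancel₀ (coord_ne O s n T J hJ β hβ i k) this
  have key := index_map_eq ι hι hfin f hf g (by intro x; ext i k; rfl)
  have h1 := index_pi (fun i => Ti O s n T i) (fun i => Ji O s n T J i) (ι β) hβ
  have h2 := index_single β
  exact h1.symm.trans (key.symm.trans h2)

lemma exists_gen [Finite (ResidueField O)] (hn : ∀ i, 0 < n i) [IsLocalRing T]
    (J : Ideal T) (hJ : Finite (T ⧸ J))
    (hres : s ≤ Nat.card (ResidueField O))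
    (hprin : ∀ i, (Ji O s n T J i).IsPrincipal) :
    ∃ β ∈ J, ∀ i, Ji O s n T J i = Ideal.span {ψ O s n T i β} := by
  have hnt : ∀ i, Nontrivial (Ti O s n T i) := fun i => by
    have : Nonempty (Fin (n i)) := ⟨⟨0, hn i⟩⟩
    infer_instance
  have hloc : ∀ i, IsLocalRing (Ti O s n T i) := fun i =>
    IsLocalRing.of_surjective' (ψ O s n T i).toRingHom (psi_surj O s n T i)
  let M := J.restrictScalars O
  let L : ∀ i, M →ₗ[O] Ti O s n T i := fun i => (ψ O s n T i).toLinearMap.comp M.subtype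
  let K : Fin s → Submodule O M := fun i =>
    ((maximalIdeal (Ti O s n T i) • Ji O s n T J i : Ideal _).restrictScalars O).comap (L i)
  have hK : ∀ i, K i ≠ ⊤ := by
    intro i htop
    have hle : Ji O s n T J i ≤ maximalIdeal (Ti O s n T i) • Ji O s n T J i := by
      refine Ideal.map_le_iff_le_comap.2 fun x hx => ?_
      have : (⟨x, hx⟩ : M) ∈ K i := htop ▸ Submodule.mem_top
      exact this
    have hbot := Submodule.eq_bot_of_le_smul_of_le_jacobson_bot _ _ (hprin i).fg hle
      (IsLocalRing.maximalIdeal_le_jacobson _)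
    obtain ⟨x, hx, hne⟩ := exists_coord_ne O s n T J hJ i ⟨0, hn i⟩
    have h : ψ O s n T i x ∈ Ji O s n T J i := Ideal.mem_map_of_mem _ hx
    rw [hbot, Submodule.mem_bot] at h
    exact hne (congrFun (congrArg Subtype.val h) _)
  obtain ⟨β, hβ⟩ := exists_not_mem_all (R := O) (M := M) (ι := Fin s) K hK Finset.univ
    (by rw [Finset.card_univ, Fintype.card_fin]; exact hres)
  refine ⟨β.1, β.2, fun i => ?_⟩
  have hmem : ψ O s n T i β.1 ∈ Ji O s n T J i := Ideal.mem_map_of_mem _ β.2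
  obtain ⟨γ, hγ⟩ := (hprin i).principal
  change Ji O s n T J i = Ideal.span {γ} at hγ
  have h := hmem
  rw [hγ, Ideal.mem_span_singleton'] at h
  obtain ⟨t, ht⟩ := h
  have hu : IsUnit t := by
    by_contra hnu
    apply hβ i (Finset.mem_univ _)
    change ψ O s n T i β.1 ∈ maximalIdeal (Ti O s n T i) • Ji O s n T J i
    rw [← ht]
    exact Submodule.smul_mem_smul ((mem_maximalIdeal _).2 hnu)
      (hγ ▸ Ideal.mem_span_singleton_self γ)
  rw [hγ, ← ht, Ideal.span_singleton_mul_left_unit hu]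

/-- (Berger–Klosin–Kramer.)  If the residue field of `O` has at least `s` elements and each
`J_i ⊆ T_i` is principal, then `#(∏ T_i/J_i) ≥ #(T/J)`, with equality iff `J` is principal. -/
theorem statement
    -- `O` is the valuation ring of a finite extension of `ℚ_p`:
    [IsAdicComplete (maximalIdeal O) O] [Finite (ResidueField O)]
    [CharP (ResidueField O) p]
    (hs : 0 < s) (hn : ∀ i, 0 < n i)
    -- `T` is a local complete `O`-subalgebra of full rank in `A`:
    [IsLocalRing T] [IsAdicComplete (maximalIdeal T) T]
    (hfullrank : Finite ((A O s n) ⧸ T.toSubmodule))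
    -- `J ⊆ T` is an ideal of finite index:
    (J : Ideal T) (hJ : Finite (T ⧸ J))
    -- the residue field of `O` has at least `s` elements:
    (hres : s ≤ Nat.card (ResidueField O))
    -- each `J_i` is principal:
    (hprin : ∀ i, (Ji O s n T J i).IsPrincipal) :
    Nat.card (T ⧸ J) ≤ Nat.card (∀ i, Ti O s n T i ⧸ Ji O s n T J i) ∧
      (Nat.card (∀ i, Ti O s n T i ⧸ Ji O s n T J i) = Nat.card (T ⧸ J) ↔
        J.IsPrincipal) := by
  obtain ⟨β, hβJ, hβ⟩ := exists_gen O s n T hn J hJ hres hprin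
  have hcard := card_eq O s n T hfullrank J hJ β hβ
  have hle : (Ideal.span {β} : Ideal T).toAddSubgroup ≤ J.toAddSubgroup :=
    (Ideal.span_singleton_le_iff_mem J).2 hβJ
  have hmul := AddSubgroup.relIndex_mul_index hle
  change _ * Nat.card (T ⧸ J) = Nat.card (T ⧸ Ideal.span {β}) at hmul
  have hJpos : 0 < Nat.card (T ⧸ J) := Nat.card_pos
  have hfin : ∀ i, Finite (Ti O s n T i ⧸ Ji O s n T J i) := fun i => by
    refine Finite.of_surjective (Ideal.Quotient.lift J
      ((Ideal.Quotient.mk (Ji O s n T J i)).comp (ψ O s n T i).toRingHom) (fun a ha =>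
        Ideal.Quotient.eq_zero_iff_mem.2 (Ideal.mem_map_of_mem _ ha))) ?_
    intro y
    obtain ⟨y, rfl⟩ := Ideal.Quotient.mk_surjective y
    obtain ⟨x, rfl⟩ := psi_surj O s n T i y
    exact ⟨Ideal.Quotient.mk J x, rfl⟩
  have hpos : 0 < Nat.card (∀ i, Ti O s n T i ⧸ Ji O s n T J i) := Nat.card_pos
  rw [hcard] at hpos
  refine ⟨?_, ?_, ?_⟩
  · rw [hcard]
    exact Nat.le_of_dvd hpos (Dvd.intro_left _ hmul)
  · intro heq
    rw [← hcard, heq] at hmul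
    have h1 := Nat.eq_of_mul_eq_mul_right hJpos (hmul.trans (one_mul _).symm)
    have h2 := AddSubgroup.relIndex_eq_one.1 h1
    exact ⟨β, le_antisymm h2 hle⟩
  · rintro ⟨γ, hγ⟩
    change J = Ideal.span {γ} at hγ
    have := card_eq O s n T hfullrank J hJ γ (fun i => by
      rw [Ji, hγ, Ideal.map_span, Set.image_singleton])
    rw [this, hγ]

end Stmt0
end
end

section
/- (Equality part of Lemma 2.6.) Assume that the residue field F_ϖ of O has at least s elements (equivalently #F_ϖ^× ≥ s−1) and that each ideal J_i ⊆ T_i is principal. Then the ideal of ∏_{i=1}^s T_i generated by J equals the product ideal: J · ∏_{i=1}^s T_i = ∏_{i=1}^s J_i. (In particular there exists α ∈ J such that φ_i(α) generates J_i for every i.) -/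
/-!
Setting: `O` is the valuation ring of a finite extension of `ℚ_p`, abstracted as a complete
discrete valuation ring with finite residue field of characteristic `p`.
`A = ∏ i, O^(n i)`, `T ⊆ A` a local complete `O`-subalgebra of full rank (`A/T` finite),
`J ⊆ T` an ideal of finite index, `T_i = φ_i(T)`, `J_i = φ_i(J)`.
-/

open IsLocalRing

set_option synthInstance.maxHeartbeats 1000000
set_option maxHeartbeats 1000000

noncomputable section

namespace Stmt2

variable (p : ℕ) [Fact (Nat.Prime p)]
variable (O : Type) [CommRing O] [IsDomain O] [IsDiscreteValuationRing O]
variable (s : ℕ) (n : Fin s → ℕ)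

/-- The ambient algebra `A = ∏_{i=1}^s O^{n_i}`. -/
abbrev A : Type := ∀ i : Fin s, Fin (n i) → O

/-- The canonical projection `φ_i : A → A_i = O^{n_i}`. -/
def φ (i : Fin s) : A O s n →ₐ[O] (Fin (n i) → O) :=
  Pi.evalAlgHom O (fun i => Fin (n i) → O) i

variable (T : Subalgebra O (A O s n))

/-- `T_i = φ_i(T)`. -/
def Ti (i : Fin s) : Subalgebra O (Fin (n i) → O) := T.map (φ O s n i)

/-- The projection `T → T_i` induced by `φ_i`. -/
def ψ (i : Fin s) : T →ₐ[O] Ti O s n T i :=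
  AlgHom.codRestrict ((φ O s n i).comp T.val) (Ti O s n T i)
    (fun x => ⟨x.1, x.2, rfl⟩)

/-- `J_i = φ_i(J)`, as an ideal of `T_i`. -/
def Ji (J : Ideal T) (i : Fin s) : Ideal (Ti O s n T i) :=
  J.map (ψ O s n T i)

/-- The natural inclusion `T → ∏_{i=1}^s T_i`. -/
def Ψ : T →ₐ[O] ∀ i, Ti O s n T i :=
  Pi.algHom O _ (fun i => ψ O s n T i)

/-- The ideal `∏_{i=1}^s J_i` of the product ring `∏_{i=1}^s T_i`, consisting of the tuples
whose `i`-th entry lies in `J_i`. -/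
def prodIdeal (J : Ideal T) : Ideal (∀ i, Ti O s n T i) where
  carrier := {x | ∀ i, x i ∈ Ji O s n T J i}
  add_mem' hx hy i := (Ji O s n T _ i).add_mem (hx i) (hy i)
  zero_mem' i := (Ji O s n T _ i).zero_mem
  smul_mem' c x hx i := (Ji O s n T _ i).smul_mem (c i) (hx i)

theorem exists_notMem_aux {R M ι : Type*} [CommRing R] [IsLocalRing R] [AddCommGroup M] [Module R M]
    [Finite (ResidueField R)] (P : Submodule R M) (N : ι → Submodule R M) (S : Finset ι)
    (hS : S.card ≤ Nat.card (ResidueField R)) (h : ∀ i ∈ S, ¬ P ≤ N i) :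
    ∃ x ∈ P, ∀ i ∈ S, x ∉ N i := by
  classical
  induction S using Finset.induction_on with
  | empty => exact ⟨0, P.zero_mem, by simp⟩
  | insert i S hi ih =>
    obtain ⟨a, haP, ha⟩ := ih ((Finset.card_le_card (Finset.subset_insert i S)).trans hS)
      (fun j hj => h j (Finset.mem_insert_of_mem hj))
    obtain ⟨b, hbP, hb⟩ := SetLike.not_le_iff_exists.mp (h i (Finset.mem_insert_self i S))
    have hab : ∀ j ∈ insert i S, ¬ (a ∈ N j ∧ b ∈ N j) := by
      intro j hj hh
      rcases Finset.mem_insert.mp hj with rfl | hj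
      · exact hb hh.2
      · exact ha j hj hh.1
    haveI := Fintype.ofFinite (ResidueField R)
    obtain ⟨r, hr⟩ := (IsLocalRing.residue_surjective (R := R)).hasRightInverse
    let f : Option (ResidueField R) → M := fun o => o.elim b (fun c => a + r c • b)
    have hfP : ∀ o, f o ∈ P := by
      rintro (_ | c)
      · exact hbP
      · exact P.add_mem haP (P.smul_mem _ hbP)
    by_contra hcon
    push Not at hcon
    choose g hgS hg using fun o => hcon (f o) (hfP o)
    have hcard : (insert i S).card < (Finset.univ : Finset (Option (ResidueField R))).card := by
      rw [Finset.card_univ, Fintype.card_option, ← Nat.card_eq_fintype_card]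
      omega
    obtain ⟨x, -, y, -, hxy, hgxy⟩ :=
      Finset.exists_ne_map_eq_of_card_lt_of_maps_to hcard (f := g) (fun o _ => hgS o)
    have hx := hg x
    have hy := hg y
    rw [← hgxy] at hy
    have key : ∀ c, a + r c • b ∈ N (g x) → b ∉ N (g x) := fun c h1 h2 =>
      hab _ (hgS x) ⟨((N (g x)).add_mem_iff_left ((N (g x)).smul_mem _ h2)).mp h1, h2⟩
    rcases x with _ | c <;> rcases y with _ | d
    · exact hxy rfl
    · exact key d hy hx
    · exact key c hx hy
    · have hne : c ≠ d := fun e => hxy (by rw [e])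
      have hu : IsUnit (r c - r d) := by
        rw [← IsLocalRing.residue_ne_zero_iff_isUnit, map_sub, hr c, hr d]
        exact sub_ne_zero.mpr hne
      have h3 : (r c - r d) • b ∈ N (g (some c)) := by
        have := (N (g (some c))).sub_mem hx hy
        simpa [f, sub_smul] using this
      exact key c hx ((Submodule.smul_mem_iff_of_isUnit _ hu).mp h3)

theorem span_aux {T B : Type*} [CommRing T] [IsLocalRing T] [CommRing B] (f : T →+* B)
    (hf : Function.Surjective f) (J : Ideal T) (hp : (J.map f).IsPrincipal) (α : T) (hα : α ∈ J)
    (h : J ≤ (Ideal.map f (maximalIdeal T * J)).comap f ∨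
      α ∉ (Ideal.map f (maximalIdeal T * J)).comap f) :
    J.map f = Ideal.span {f α} := by
  obtain ⟨g, hg⟩ := hp
  have hg : J.map f = Ideal.span {g} := hg
  have hgJ : g ∈ J.map f := hg ▸ Ideal.mem_span_singleton_self g
  obtain ⟨γ, hγ, rfl⟩ := (Ideal.mem_map_iff_of_surjective f hf).mp hgJ
  rcases h with h | h
  · have h1 := h hγ
    rw [Ideal.mem_comap, Ideal.map_mul, hg, Ideal.mem_mul_span_singleton] at h1
    obtain ⟨z, hz, hz2⟩ := h1
    obtain ⟨t, ht, rfl⟩ := (Ideal.mem_map_iff_of_surjective f hf).mp hz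
    have hu : IsUnit (1 - t) := by
      by_contra hc
      have := (maximalIdeal T).add_mem ((mem_maximalIdeal _).mpr hc) ht
      rw [sub_add_cancel] at this
      exact (mem_maximalIdeal _).mp this isUnit_one
    have h0 : f γ = 0 := by
      have h2 : f (1 - t) * f γ = 0 := by
        rw [map_sub, map_one, sub_mul, hz2, one_mul, sub_self]
      exact (hu.map f).mul_right_eq_zero.mp h2
    have hα' := Ideal.mem_map_of_mem f hα
    rw [hg, h0, Ideal.mem_span_singleton, zero_dvd_iff] at hα'
    rw [hg, h0, hα']
  · have hα' := Ideal.mem_map_of_mem f hα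
    rw [hg, Ideal.mem_span_singleton'] at hα'
    obtain ⟨c, hc⟩ := hα'
    obtain ⟨t, rfl⟩ := hf c
    have hu : IsUnit t := by
      by_contra hn
      apply h
      rw [Ideal.mem_comap, ← hc, ← map_mul]
      exact Ideal.mem_map_of_mem f (Ideal.mul_mem_mul ((mem_maximalIdeal _).mpr hn) hγ)
    rw [hg, ← hc, Ideal.span_singleton_mul_left_unit (hu.map f)]

/-- (Equality part of Lemma 2.6.)  If the residue field of `O` has at least `s` elements and
each `J_i ⊆ T_i` is principal, then the ideal of `∏_{i=1}^s T_i` generated by `J` equals the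
product ideal `∏_{i=1}^s J_i`; in particular there is an `α ∈ J` such that `φ_i(α)` generates
`J_i` for every `i`. -/
theorem statement
    -- `O` is the valuation ring of a finite extension of `ℚ_p`:
    [IsAdicComplete (maximalIdeal O) O] [Finite (ResidueField O)]
    [CharP (ResidueField O) p]
    (hs : 0 < s) (hn : ∀ i, 0 < n i)
    -- `T` is a local complete `O`-subalgebra of full rank in `A`:
    [IsLocalRing T] [IsAdicComplete (maximalIdeal T) T]
    (hfullrank : Finite ((A O s n) ⧸ T.toSubmodule))
    -- `J ⊆ T` is an ideal of finite index:
    (J : Ideal T) (hJ : Finite (T ⧸ J))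
    -- the residue field of `O` has at least `s` elements:
    (hres : s ≤ Nat.card (ResidueField O))
    -- each `J_i` is principal:
    (hprin : ∀ i, (Ji O s n T J i).IsPrincipal) :
    Ideal.map (Ψ O s n T) J = prodIdeal O s n T J ∧
      ∃ α : T, α ∈ J ∧ ∀ i, Ji O s n T J i = Ideal.span {ψ O s n T i α} := by
  classical
  have hsurj : ∀ i, Function.Surjective (ψ O s n T i) := by
    rintro i ⟨_, x, hx, rfl⟩
    exact ⟨⟨x, hx⟩, rfl⟩
  let N : Fin s → Submodule O T := fun i =>
    ((Ideal.map (ψ O s n T i).toRingHom (maximalIdeal T * J)).comap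
      (ψ O s n T i).toRingHom).restrictScalars O
  obtain ⟨α, hα, hαN⟩ := exists_notMem_aux (J.restrictScalars O) N
    (Finset.univ.filter fun i => ¬ J.restrictScalars O ≤ N i)
    ((Finset.card_le_univ _).trans (by simpa using hres)) (fun i hi => (Finset.mem_filter.mp hi).2)
  have hgen : ∀ i, Ji O s n T J i = Ideal.span {ψ O s n T i α} := by
    intro i
    refine span_aux (ψ O s n T i).toRingHom (hsurj i) J (hprin i) α hα ?_
    by_cases h : J.restrictScalars O ≤ N i
    · exact Or.inl h
    · exact Or.inr (hαN i (Finset.mem_filter.mpr ⟨Finset.mem_univ _, h⟩))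
  refine ⟨le_antisymm ?_ ?_, α, hα, hgen⟩
  · rw [Ideal.map_le_iff_le_comap]
    intro x hx i
    exact Ideal.mem_map_of_mem (ψ O s n T i) hx
  · intro x hx
    have hx' : ∀ i, ∃ y, y * ψ O s n T i α = x i := fun i => by
      have := hx i
      rwa [hgen i, Ideal.mem_span_singleton'] at this
    choose y hy using hx'
    have : x = y * Ψ O s n T α := funext fun i => (hy i).symm
    rw [this]
    exact Ideal.mul_mem_left _ _ (Ideal.mem_map_of_mem _ hα)

end Stmt2
end
end

section
/- (Proposition 2.3.) Assume that the residue field F_ϖ of O has at least s elements (equivalently #F_ϖ^× ≥ s−1) and that each ideal J_i ⊆ T_i is principal. Then the Hilbert–Samuel multiplicities satisfy e(J,T) = ∑_{i=1}^s e(J_i,T_i). Concretely: for all sufficiently large natural numbers r, the length of J^r/J^{r+1} as a T-module equals the sum over i = 1,…,s of the lengths of J_i^r/J_i^{r+1} as T_i-modules. -/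
/-!
Setting: `O` is the valuation ring of a finite extension of `ℚ_p`, abstracted as a complete
discrete valuation ring with finite residue field of characteristic `p`.
`A = ∏ i, O^(n i)`, `T ⊆ A` a local complete `O`-subalgebra of full rank (`A/T` finite),
`J ⊆ T` an ideal of finite index, `T_i = φ_i(T)`, `J_i = φ_i(J)`.
-/

open IsLocalRing

set_option synthInstance.maxHeartbeats 1000000
set_option maxHeartbeats 1000000

noncomputable section

namespace Stmt3

variable (p : ℕ) [Fact (Nat.Prime p)]
variable (O : Type) [CommRing O] [IsDomain O] [IsDiscreteValuationRing O]
variable (s : ℕ) (n : Fin s → ℕ)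

/-- The ambient algebra `A = ∏_{i=1}^s O^{n_i}`. -/
abbrev A : Type := ∀ i : Fin s, Fin (n i) → O

/-- The canonical projection `φ_i : A → A_i = O^{n_i}`. -/
def φ (i : Fin s) : A O s n →ₐ[O] (Fin (n i) → O) :=
  Pi.evalAlgHom O (fun i => Fin (n i) → O) i

variable (T : Subalgebra O (A O s n))

/-- `T_i = φ_i(T)`. -/
def Ti (i : Fin s) : Subalgebra O (Fin (n i) → O) := T.map (φ O s n i)

/-- The projection `T → T_i` induced by `φ_i`. -/
def ψ (i : Fin s) : T →ₐ[O] Ti O s n T i :=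
  AlgHom.codRestrict ((φ O s n i).comp T.val) (Ti O s n T i)
    (fun x => ⟨x.1, x.2, rfl⟩)

/-- `J_i = φ_i(J)`, as an ideal of `T_i`. -/
def Ji (J : Ideal T) (i : Fin s) : Ideal (Ti O s n T i) :=
  J.map (ψ O s n T i)

/-- The natural inclusion `T → ∏_{i=1}^s T_i`. -/
def Ψ : T →ₐ[O] ∀ i, Ti O s n T i :=
  Pi.algHom O _ (fun i => ψ O s n T i)

/-- The ideal `∏_{i=1}^s J_i` of the product ring `∏_{i=1}^s T_i`, consisting of the tuples
whose `i`-th entry lies in `J_i`. -/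
def prodIdeal (J : Ideal T) : Ideal (∀ i, Ti O s n T i) where
  carrier := {x | ∀ i, x i ∈ Ji O s n T J i}
  add_mem' hx hy i := (Ji O s n T _ i).add_mem (hx i) (hy i)
  zero_mem' i := (Ji O s n T _ i).zero_mem
  smul_mem' c x hx i := (Ji O s n T _ i).smul_mem (c i) (hx i)

/-- The length of a module: the Krull dimension of its lattice of submodules. -/
def moduleLength (R M : Type*) [Semiring R] [AddCommMonoid M] [Module R M] : WithBot ℕ∞ :=
  Order.krullDim (Submodule R M)

/-- The Hilbert–Samuel function `r ↦ length_T (J^r / J^(r+1))` of an ideal `J` of a ring `T`. -/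
def hilbertSamuel {T : Type*} [CommRing T] (J : Ideal T) (r : ℕ) : WithBot ℕ∞ :=
  moduleLength T (↥(J ^ r) ⧸ Submodule.comap (J ^ r).subtype (J ^ (r + 1)))


lemma length_quot_aux {R N M : Type*} [CommRing R] [AddCommGroup N] [Module R N]
    [AddCommGroup M] [Module R M] (f : N →ₗ[R] M) (hf : Function.Injective f) (x : R)
    (hx : ∀ m : M, x • m = 0 → m = 0) (hfin : Module.length R (M ⧸ LinearMap.range f) ≠ ⊤) :
    Module.length R (N ⧸ LinearMap.range (LinearMap.lsmul R N x)) =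
      Module.length R (M ⧸ LinearMap.range (LinearMap.lsmul R M x)) := by
  have hx' : ∀ m m' : M, x • m = x • m' → m = m' := fun m m' h => by
    have := hx (m - m') (by rw [smul_sub, h, sub_self])
    exact sub_eq_zero.mp this
  let P : Submodule R M := LinearMap.range (x • f)
  let Q := LinearMap.range f
  let X := LinearMap.range (LinearMap.lsmul R M x)
  have hPQ : P ≤ Q := by
    rintro _ ⟨n, rfl⟩; exact ⟨x • n, by simp⟩
  have hPX : P ≤ X := by
    rintro _ ⟨n, rfl⟩; exact ⟨f n, by simp⟩
  let a : (N ⧸ LinearMap.range (LinearMap.lsmul R N x)) →ₗ[R] (M ⧸ P) :=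
    Submodule.mapQ _ _ f (by rintro _ ⟨n, rfl⟩; exact ⟨n, by simp⟩)
  let b : (M ⧸ P) →ₗ[R] (M ⧸ Q) := Submodule.factor hPQ
  let c : (M ⧸ Q) →ₗ[R] (M ⧸ P) := Submodule.mapQ _ _ (LinearMap.lsmul R M x)
    (by rintro _ ⟨n, rfl⟩; exact ⟨n, by simp⟩)
  let d : (M ⧸ P) →ₗ[R] (M ⧸ X) := Submodule.factor hPX
  have ha : Function.Injective a := by
    rw [injective_iff_map_eq_zero]
    intro y
    obtain ⟨n, rfl⟩ := Submodule.Quotient.mk_surjective _ y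
    intro h
    have h2 : f n ∈ P := (Submodule.Quotient.mk_eq_zero _).1 h
    obtain ⟨n', h3⟩ := h2
    refine (Submodule.Quotient.mk_eq_zero _).2 ⟨n', hf ?_⟩
    simpa using h3
  have hb : Function.Surjective b := Submodule.factor_surjective hPQ
  have hd : Function.Surjective d := Submodule.factor_surjective hPX
  have hc : Function.Injective c := by
    rw [injective_iff_map_eq_zero]
    intro y
    obtain ⟨n, rfl⟩ := Submodule.Quotient.mk_surjective _ y
    intro h
    have h2 : x • n ∈ P := (Submodule.Quotient.mk_eq_zero _).1 h
    obtain ⟨n', h3⟩ := h2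
    exact (Submodule.Quotient.mk_eq_zero _).2 ⟨n', hx' _ _ h3⟩
  have hab : Function.Exact a b := by
    intro y
    obtain ⟨m, rfl⟩ := Submodule.Quotient.mk_surjective _ y
    constructor
    · intro h
      have h2 : m ∈ Q := (Submodule.Quotient.mk_eq_zero _).1 h
      obtain ⟨n, rfl⟩ := h2
      exact ⟨Submodule.Quotient.mk n, rfl⟩
    · rintro ⟨z, hz⟩
      obtain ⟨n, rfl⟩ := Submodule.Quotient.mk_surjective _ z
      rw [← hz]
      exact (Submodule.Quotient.mk_eq_zero _).2 ⟨n, rfl⟩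
  have hcd : Function.Exact c d := by
    intro y
    obtain ⟨m, rfl⟩ := Submodule.Quotient.mk_surjective _ y
    constructor
    · intro h
      have h2 : m ∈ X := (Submodule.Quotient.mk_eq_zero _).1 h
      obtain ⟨n, rfl⟩ := h2
      exact ⟨Submodule.Quotient.mk n, rfl⟩
    · rintro ⟨z, hz⟩
      obtain ⟨n, rfl⟩ := Submodule.Quotient.mk_surjective _ z
      rw [← hz]
      exact (Submodule.Quotient.mk_eq_zero _).2 ⟨n, rfl⟩
  have e1 := Module.length_eq_add_of_exact a b ha hb hab
  have e2 := Module.length_eq_add_of_exact c d hc hd hcd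
  rw [e1, add_comm] at e2
  exact ENat.add_right_injective_of_ne_top hfin e2

/-- Avoiding `s` proper submodules. -/
lemma avoid_aux {R M : Type*} [CommRing R] [AddCommGroup M] [Module R M] {ι F : Type*} [Finite F]
    (K : ι → Submodule R M) (hK : ∀ i, K i ≠ ⊤)
    (c : F → R) (hc : ∀ a b, a ≠ b → IsUnit (c a - c b))
    (S : Finset ι) (hS : S.card ≤ Nat.card F) : ∃ x : M, ∀ i ∈ S, x ∉ K i := by
  classical
  induction S using Finset.induction_on with
  | empty => exact ⟨0, by simp⟩
  | insert j S hj ih =>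
    rw [Finset.card_insert_of_notMem hj] at hS
    obtain ⟨x, hx⟩ := ih (by omega)
    obtain ⟨y, hy⟩ : ∃ y, y ∉ K j := by
      by_contra! h
      exact hK j (eq_top_iff.2 fun z _ => h z)
    by_cases hyS : ∀ i ∈ S, y ∉ K i
    · refine ⟨y, fun i hi => ?_⟩
      rcases Finset.mem_insert.1 hi with rfl | hi
      · exact hy
      · exact hyS i hi
    push Not at hyS
    obtain ⟨i₀, hi₀, hyi₀⟩ := hyS
    by_contra! H
    have H' : ∀ a : F, ∃ i ∈ insert j (S.erase i₀), x + c a • y ∈ K i := by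
      intro a
      obtain ⟨i, hi, hi2⟩ := H (x + c a • y)
      refine ⟨i, ?_, hi2⟩
      rcases Finset.mem_insert.1 hi with rfl | hi
      · exact Finset.mem_insert_self _ _
      · refine Finset.mem_insert_of_mem (Finset.mem_erase.2 ⟨?_, hi⟩)
        rintro rfl
        exact hx _ hi (by simpa using (K i).sub_mem hi2 ((K i).smul_mem (c a) hyi₀))
    choose g hg hg2 using H'
    have hginj : Function.Injective g := by
      intro a b hab
      by_contra hne
      have h1 := hg2 a
      have h2 := hg2 b
      rw [hab] at h1
      have h3 : (c a - c b) • y ∈ K (g b) := by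
        have := (K (g b)).sub_mem h1 h2
        rw [sub_smul]; simpa using this
      have h4 : y ∈ K (g b) := by
        obtain ⟨u, hu⟩ := hc a b hne
        rw [← hu] at h3
        have := (K (g b)).smul_mem (↑u⁻¹ : R) h3
        rwa [smul_smul, Units.inv_mul, one_smul] at this
      have h5 : x ∈ K (g b) := by simpa using (K (g b)).sub_mem h2 ((K (g b)).smul_mem (c b) h4)
      rcases Finset.mem_insert.1 (hg b) with h | h
      · exact hy (h ▸ h4)
      · exact hx _ (Finset.mem_of_mem_erase h) h5
    have := Nat.card_le_card_of_injective (fun a => (⟨g a, hg a⟩ : ↥(insert j (S.erase i₀))))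
      (fun a b h => hginj (congrArg Subtype.val h))
    rw [Nat.card_eq_fintype_card (α := ↥(insert j (S.erase i₀))), Fintype.card_coe] at this
    have h6 := Finset.card_insert_le j (S.erase i₀)
    rw [Finset.card_erase_of_mem hi₀] at h6
    have := Finset.card_pos.2 ⟨i₀, hi₀⟩
    omega

/-- A finite module over a local ring is killed by a power of each element of the maximal ideal. -/
lemma kill_aux {R Q : Type*} [CommRing R] [IsLocalRing R] [AddCommGroup Q] [Module R Q]
    [Finite Q] (w : R) (hw : w ∈ maximalIdeal R) : ∃ k : ℕ, ∀ q : Q, w ^ k • q = 0 := by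
  have h : ¬ Function.Injective (fun k : ℕ => (fun q : Q => w ^ k • q)) :=
    not_injective_infinite_finite _
  rw [Function.Injective] at h
  push Not at h
  obtain ⟨a, b, hab, hne⟩ := h
  wlog hlt : a < b generalizing a b
  · exact this b a hab.symm hne.symm (by omega)
  refine ⟨a, fun q => ?_⟩
  obtain ⟨d, rfl⟩ : ∃ d, b = a + (d + 1) := ⟨b - a - 1, by omega⟩
  have h1 : (1 - w ^ (d + 1)) • (w ^ a • q) = 0 := by
    have : w ^ a • q = w ^ (a + (d + 1)) • q := congrFun hab q
    rw [sub_smul, one_smul, smul_smul, ← pow_add, add_comm (d+1) a, ← this, sub_self]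
  have hu : IsUnit (1 - w ^ (d + 1)) := by
    apply IsLocalRing.isUnit_one_sub_self_of_mem_nonunits
    exact (maximalIdeal R).pow_mem_of_mem hw _ (by omega)
  exact (hu.smul_eq_zero).1 h1

/-- If `J S ⊆ x S` then eventually `J^(r+1) = x J^r`. -/
lemma reduction_aux {R S : Type*} [CommRing R] [CommRing S] [Algebra R S] [IsNoetherian R S]
    (hinj : Function.Injective (algebraMap R S)) (J : Ideal R) (x : R) (hxJ : x ∈ J)
    (hJx : ∀ y ∈ J, ∃ b : S, algebraMap R S y = x • b) :
    ∃ r₀ : ℕ, ∀ r, r₀ ≤ r → ∀ y ∈ J ^ (r + 1), ∃ z ∈ J ^ r, y = x * z := by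
  have hpow : ∀ r, ∀ y ∈ J ^ r, ∃ b : S, algebraMap R S y = x ^ r • b := by
    intro r y hy
    have h1 : J.map (algebraMap R S) ≤ Ideal.span {algebraMap R S x} := by
      rw [Ideal.map_le_iff_le_comap]
      intro y hy
      obtain ⟨b, hb⟩ := hJx y hy
      rw [Ideal.mem_comap, Ideal.mem_span_singleton']
      exact ⟨b, by rw [hb, Algebra.smul_def, mul_comm]⟩
    have h2 : algebraMap R S y ∈ Ideal.span {algebraMap R S x ^ r} := by
      rw [← Ideal.span_singleton_pow]
      apply Ideal.pow_right_mono h1 r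
      rw [← Ideal.map_pow]
      exact Ideal.mem_map_of_mem _ hy
    obtain ⟨b, hb⟩ := Ideal.mem_span_singleton'.1 h2
    exact ⟨b, by rw [← hb, Algebra.smul_def, map_pow, mul_comm]⟩
  let Mr : ℕ → Submodule R S := fun r =>
    Submodule.comap (LinearMap.lsmul R S (x ^ r))
      (Submodule.map (Algebra.linearMap R S) (J ^ r))
  have hmem : ∀ r b, b ∈ Mr r ↔ ∃ z ∈ J ^ r, algebraMap R S z = x ^ r • b := by
    intro r b; rfl
  have hmono : Monotone Mr := by
    apply monotone_nat_of_le_succ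
    intro r b hb
    obtain ⟨z, hz, h⟩ := (hmem r b).1 hb
    refine (hmem (r + 1) b).2 ⟨x * z, ?_, ?_⟩
    · rw [pow_succ']; exact Ideal.mul_mem_mul hxJ hz
    · rw [map_mul, h, pow_succ', mul_smul, Algebra.smul_def x]
  obtain ⟨r₀, h₀⟩ := monotone_stabilizes_iff_noetherian.2 ‹IsNoetherian R S› ⟨Mr, hmono⟩
  refine ⟨r₀, fun r hr y hy => ?_⟩
  obtain ⟨b, hb⟩ := hpow _ y hy
  have h1 : b ∈ Mr (r + 1) := (hmem _ _).2 ⟨y, hy, hb⟩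
  have h2 : Mr (r + 1) = Mr r := (h₀ (r+1) (by omega)).symm.trans (h₀ r hr)
  rw [h2, hmem] at h1
  obtain ⟨z, hz, h⟩ := h1
  refine ⟨z, hz, hinj ?_⟩
  rw [map_mul, h, hb, pow_succ', mul_smul, Algebra.smul_def x]

lemma sum_aux {R N ι : Type*} [CommRing R] [AddCommGroup N] [Module R N] [Fintype ι]
    (S M : ι → Type*) [∀ i, CommRing (S i)] [∀ i, Algebra R (S i)] [∀ i, AddCommGroup (M i)]
    [∀ i, Module (S i) (M i)] [∀ i, Module R (M i)] [∀ i, IsScalarTower R (S i) (M i)]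
    (hsurj : ∀ i, Function.Surjective (algebraMap R (S i)))
    (e : N ≃ₗ[R] (∀ i, M i)) (x : R) :
    Module.length R (N ⧸ LinearMap.range (LinearMap.lsmul R N x)) =
      ∑ i, Module.length (S i) (M i ⧸
        LinearMap.range (LinearMap.lsmul (S i) (M i) (algebraMap R (S i) x))) := by
  classical
  have h1 : ∀ i, Module.length (S i) (M i ⧸
        LinearMap.range (LinearMap.lsmul (S i) (M i) (algebraMap R (S i) x))) =
      Module.length R (M i ⧸ LinearMap.range (LinearMap.lsmul R (M i) x)) := by
    intro i
    rw [← Module.length_eq_of_surjective (S := R) (hsurj i)]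
    refine LinearEquiv.length_eq ((Submodule.Quotient.restrictScalarsEquiv R _).symm.trans
      (Submodule.quotEquivOfEq _ _ ?_))
    ext m
    simp
  simp_rw [h1]
  rw [← Module.length_pi_of_fintype]
  refine LinearEquiv.length_eq ((Submodule.Quotient.equiv _
    (Submodule.pi Set.univ fun i => LinearMap.range (LinearMap.lsmul R (M i) x)) e ?_).trans
    (Submodule.quotientPi _))
  ext m
  simp only [Submodule.mem_map, LinearMap.mem_range, Submodule.mem_pi, Set.mem_univ, true_implies]
  constructor
  · rintro ⟨_, ⟨n, rfl⟩, rfl⟩ i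
    exact ⟨e n i, by simp⟩
  · intro h
    choose g hg using h
    refine ⟨_, ⟨e.symm g, rfl⟩, ?_⟩
    ext i
    simpa using hg i

lemma hs_aux {R S : Type*} [CommRing R] [IsNoetherianRing R] [CommRing S] [Algebra R S]
    (hinj : Function.Injective (algebraMap R S)) (J : Ideal R) [Finite (R ⧸ J)]
    (x : R) (hxJ : x ∈ J)
    (hx : ∀ m : S, x • m = 0 → m = 0)
    (hfin : Finite (S ⧸ LinearMap.range (Algebra.linearMap R S))) (r : ℕ)
    (h : ∀ y ∈ J ^ (r + 1), ∃ z ∈ J ^ r, y = x * z) :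
    hilbertSamuel J r = (Module.length R (S ⧸ LinearMap.range (LinearMap.lsmul R S x)) : ℕ∞) := by
  have hxR : ∀ m : R, x • m = 0 → m = 0 := by
    intro m hm
    apply hinj
    rw [map_zero]
    apply hx
    rw [Algebra.smul_def, ← map_mul, ← smul_eq_mul, hm, map_zero]
  have h1 : Module.length R (R ⧸ LinearMap.range (LinearMap.lsmul R R x)) =
      Module.length R (S ⧸ LinearMap.range (LinearMap.lsmul R S x)) := by
    have : IsArtinian R (S ⧸ LinearMap.range (Algebra.linearMap R S)) := isArtinian_of_finite
    exact length_quot_aux (Algebra.linearMap R S) hinj x hx Module.length_ne_top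
  have h2 : Module.length R (↥(J ^ r) ⧸ LinearMap.range (LinearMap.lsmul R ↥(J ^ r) x)) =
      Module.length R (R ⧸ LinearMap.range (LinearMap.lsmul R R x)) := by
    have hf : Finite (R ⧸ LinearMap.range (J ^ r).subtype) := by
      rw [Submodule.range_subtype]
      exact Ideal.finite_quotient_pow (IsNoetherian.noetherian J) r
    have : IsArtinian R (R ⧸ LinearMap.range (J ^ r).subtype) := isArtinian_of_finite
    exact length_quot_aux (J ^ r).subtype (Submodule.subtype_injective _) x hxR
      Module.length_ne_top
  have h3 : Submodule.comap (J ^ r).subtype (J ^ (r + 1)) =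
      LinearMap.range (LinearMap.lsmul R ↥(J ^ r) x) := by
    ext ⟨y, hy⟩
    constructor
    · intro hy'
      obtain ⟨z, hz, h⟩ := h y hy'
      exact ⟨⟨z, hz⟩, Subtype.ext h.symm⟩
    · rintro ⟨⟨z, hz⟩, hz'⟩
      have : x * z = y := congrArg Subtype.val hz'
      change y ∈ J ^ (r + 1)
      rw [← this, pow_succ']
      exact Ideal.mul_mem_mul hxJ hz
  rw [hilbertSamuel, h3, moduleLength, ← Module.coe_length, h2, h1]

lemma ψ_surj (i : Fin s) : Function.Surjective (ψ O s n T i) := by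
  rintro ⟨_, y, hy, rfl⟩
  exact ⟨⟨y, hy⟩, rfl⟩

lemma exists_gen [Finite (ResidueField O)] (hn : ∀ i, 0 < n i) [IsLocalRing T]
    (J : Ideal T) (w : O) (hw0 : w ≠ 0) (hw : algebraMap O T w ∈ J)
    (hres : s ≤ Nat.card (ResidueField O))
    (hprin : ∀ i, (Ji O s n T J i).IsPrincipal) :
    ∃ x ∈ J, ∀ i, Ji O s n T J i = Ideal.span {ψ O s n T i x} := by
  have hnt : ∀ i, Nontrivial (Fin (n i) → O) := fun i =>
    haveI : Nonempty (Fin (n i)) := ⟨⟨0, hn i⟩⟩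
    inferInstance
  have hloc : ∀ i, IsLocalRing (Ti O s n T i) := fun i =>
    IsLocalRing.of_surjective' (ψ O s n T i).toRingHom (ψ_surj O s n T i)
  choose g hg using fun i => (hprin i).principal
  have hg' : ∀ i, Ji O s n T J i = Ideal.span {g i} := hg
  let K : Fin s → Submodule T J := fun i => Submodule.comap J.subtype
    (Ideal.comap (ψ O s n T i) (maximalIdeal (Ti O s n T i) * Ji O s n T J i))
  have hgJ : ∀ i, ∃ y ∈ J, ψ O s n T i y = g i := by
    intro i
    have : g i ∈ Ideal.map (ψ O s n T i) J := by
      change g i ∈ Ji O s n T J i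
      rw [hg']; exact Ideal.mem_span_singleton_self _
    exact (Ideal.mem_map_iff_of_surjective _ (ψ_surj O s n T i)).1 this
  have hwi : ∀ i, algebraMap O (Ti O s n T i) w ∈ Ji O s n T J i := by
    intro i
    have := Ideal.mem_map_of_mem (ψ O s n T i) hw
    rwa [AlgHom.commutes] at this
  have hK : ∀ i, K i ≠ ⊤ := by
    intro i hi
    obtain ⟨y, hy, hyg⟩ := hgJ i
    have h1 : (⟨y, hy⟩ : J) ∈ K i := by rw [hi]; trivial
    have h2 : ψ O s n T i y ∈ maximalIdeal (Ti O s n T i) * Ji O s n T J i := h1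
    rw [hyg, hg', Ideal.mem_mul_span_singleton] at h2
    obtain ⟨m, hm, h3⟩ := h2
    have h4 : (1 - m) * g i = 0 := by rw [sub_mul, one_mul, h3, sub_self]
    have h5 : g i = 0 :=
      ((IsLocalRing.isUnit_one_sub_self_of_mem_nonunits m hm).mul_right_eq_zero).1 h4
    have h6 := hwi i
    rw [hg', h5, Ideal.mem_span_singleton, zero_dvd_iff] at h6
    have h7 := congrFun (congrArg Subtype.val h6) ⟨0, hn i⟩
    exact hw0 h7
  obtain ⟨sec, hsec⟩ : ∃ f : ResidueField O → O, ∀ a, residue O (f a) = a :=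
    ⟨_, Function.surjInv_eq (IsLocalRing.residue_surjective)⟩
  obtain ⟨⟨x, hxJ⟩, hx⟩ := avoid_aux (R := T) (M := J) (ι := Fin s) (F := ResidueField O) K hK (fun a => algebraMap O T (sec a)) (by
    intro a b hab
    rw [← map_sub]
    apply IsUnit.map
    by_contra h
    have h1 : residue O (sec a - sec b) = 0 := (residue_eq_zero_iff _).2 h
    rw [map_sub, hsec, hsec] at h1
    exact hab (sub_eq_zero.1 h1)) (Finset.univ : Finset (Fin s)) (by simpa using hres)
  refine ⟨x, hxJ, fun i => ?_⟩
  have h1 : ψ O s n T i x ∉ maximalIdeal (Ti O s n T i) * Ji O s n T J i := hx i (Finset.mem_univ _)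
  have h2 : ψ O s n T i x ∈ Ji O s n T J i := Ideal.mem_map_of_mem _ hxJ
  rw [hg', Ideal.mem_span_singleton'] at h2
  obtain ⟨u, hu⟩ := h2
  rw [hg', Ideal.mem_mul_span_singleton] at h1
  have hunit : IsUnit u := by
    by_contra h
    exact h1 ⟨u, h, hu⟩
  rw [hg', ← hu, Ideal.span_singleton_mul_left_unit hunit]

/-- (Proposition 2.3.)  If the residue field of `O` has at least `s` elements and each
`J_i ⊆ T_i` is principal, then `e(J, T) = ∑ i, e(J_i, T_i)`: for all sufficiently large `r`,
`length_T (J^r/J^(r+1)) = ∑ i, length_{T_i} (J_i^r/J_i^(r+1))`. -/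
theorem statement
    -- `O` is the valuation ring of a finite extension of `ℚ_p`:
    [IsAdicComplete (maximalIdeal O) O] [Finite (ResidueField O)]
    [CharP (ResidueField O) p]
    (hs : 0 < s) (hn : ∀ i, 0 < n i)
    -- `T` is a local complete `O`-subalgebra of full rank in `A`:
    [IsLocalRing T] [IsAdicComplete (maximalIdeal T) T]
    (hfullrank : Finite ((A O s n) ⧸ T.toSubmodule))
    -- `J ⊆ T` is an ideal of finite index:
    (J : Ideal T) (hJ : Finite (T ⧸ J))
    -- the residue field of `O` has at least `s` elements:
    (hres : s ≤ Nat.card (ResidueField O))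
    -- each `J_i` is principal:
    (hprin : ∀ i, (Ji O s n T J i).IsPrincipal) :
    ∃ r₀ : ℕ, ∀ r : ℕ, r₀ ≤ r →
      hilbertSamuel J r = ∑ i, hilbertSamuel (Ji O s n T J i) r := by
  classical
  have : IsNoetherian T (A O s n) := isNoetherian_of_tower O inferInstance
  have hTinj : Function.Injective (algebraMap T (A O s n)) := Subtype.val_injective
  have : IsNoetherianRing T :=
    isNoetherian_of_injective (Algebra.linearMap T (A O s n)) hTinj
  -- an element of `O` lying in `J`
  obtain ⟨w, hw0, hw⟩ : ∃ w : O, w ≠ 0 ∧ algebraMap O T w ∈ J := by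
    obtain ⟨ϖ, hϖ⟩ := IsDiscreteValuationRing.exists_irreducible O
    obtain ⟨k, hk⟩ := kill_aux (Q := T ⧸ J) ϖ hϖ.not_isUnit
    refine ⟨ϖ ^ k, pow_ne_zero _ hϖ.ne_zero, ?_⟩
    have h1 : (Submodule.Quotient.mk (ϖ ^ k • (1 : T)) : T ⧸ J) = 0 :=
      hk (Submodule.Quotient.mk 1)
    have h2 := (Submodule.Quotient.mk_eq_zero _).1 h1
    rwa [Algebra.smul_def, mul_one] at h2
  obtain ⟨x, hxJ, hx⟩ := exists_gen O s n T hn J w hw0 hw hres hprin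
  have hwi : ∀ i, algebraMap O (Ti O s n T i) w ∈ Ji O s n T J i := by
    intro i
    have := Ideal.mem_map_of_mem (ψ O s n T i) hw
    rwa [AlgHom.commutes] at this
  have hnzd : ∀ i, ∀ a : Fin (n i) → O, ψ O s n T i x • a = 0 → a = 0 := by
    intro i a ha
    have h1 := hwi i
    rw [hx, Ideal.mem_span_singleton'] at h1
    obtain ⟨c, hc⟩ := h1
    have h2 : algebraMap O (Ti O s n T i) w • a = 0 := by
      rw [← hc, mul_smul, ha, smul_zero]
    funext j
    have h3 : w * a j = 0 := congrFun h2 j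
    exact (mul_eq_zero.1 h3).resolve_left hw0
  have hnzdA : ∀ a : A O s n, x • a = 0 → a = 0 := by
    intro a ha
    funext i
    exact hnzd i (a i) (congrFun ha i)
  have hJx : ∀ y ∈ J, ∃ b : A O s n, algebraMap T (A O s n) y = x • b := by
    intro y hy
    have : ∀ i, ∃ b : Ti O s n T i, b * ψ O s n T i x = ψ O s n T i y := by
      intro i
      have h1 : ψ O s n T i y ∈ Ji O s n T J i := Ideal.mem_map_of_mem _ hy
      rwa [hx, Ideal.mem_span_singleton'] at h1
    choose b hb using this
    refine ⟨fun i => (b i : Fin (n i) → O), ?_⟩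
    funext i
    have := congrArg Subtype.val (hb i)
    change ((b i : Fin (n i) → O)) * (x.1 i) = y.1 i at this
    change y.1 i = x.1 i * (b i : Fin (n i) → O)
    rw [← this, mul_comm]
  obtain ⟨r₀, hr₀⟩ := reduction_aux hTinj J x hxJ hJx
  refine ⟨r₀, fun r hr => ?_⟩
  have hfinT : Finite ((A O s n) ⧸ LinearMap.range (Algebra.linearMap T (A O s n))) := by
    refine Finite.of_surjective (α := (A O s n) ⧸ T.toSubmodule)
      (Quotient.map' id ?_) ?_
    · intro a b hab
      rw [Submodule.quotientRel_def] at hab ⊢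
      exact ⟨⟨a - b, hab⟩, rfl⟩
    · intro q
      obtain ⟨a, rfl⟩ := Submodule.Quotient.mk_surjective _ q
      exact ⟨Submodule.Quotient.mk a, rfl⟩
  rw [hs_aux hTinj J x hxJ hnzdA hfinT r (hr₀ r hr)]
  have hi : ∀ i, hilbertSamuel (Ji O s n T J i) r =
      (Module.length (Ti O s n T i) ((Fin (n i) → O) ⧸
        LinearMap.range (LinearMap.lsmul (Ti O s n T i) (Fin (n i) → O) (ψ O s n T i x))) : ℕ∞) := by
    intro i
    have : IsNoetherian (Ti O s n T i) (Fin (n i) → O) := isNoetherian_of_tower O inferInstance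
    have hinj : Function.Injective (algebraMap (Ti O s n T i) (Fin (n i) → O)) :=
      Subtype.val_injective
    have : IsNoetherianRing (Ti O s n T i) :=
      isNoetherian_of_injective (Algebra.linearMap (Ti O s n T i) (Fin (n i) → O)) hinj
    have : Finite (Ti O s n T i ⧸ Ji O s n T J i) := by
      refine Finite.of_surjective (α := T ⧸ J)
        (Ideal.quotientMap (Ji O s n T J i) (ψ O s n T i).toRingHom Ideal.le_comap_map) ?_
      exact Ideal.quotientMap_surjective (ψ_surj O s n T i)
    refine hs_aux hinj (Ji O s n T J i) _ (Ideal.mem_map_of_mem _ hxJ) (hnzd i) ?_ r ?_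
    · refine Finite.of_surjective (α := (A O s n) ⧸ T.toSubmodule)
        (Quotient.map' (fun a => a i) ?_) ?_
      · intro a b hab
        rw [Submodule.quotientRel_def] at hab ⊢
        exact ⟨ψ O s n T i ⟨a - b, hab⟩, rfl⟩
      · intro q
        obtain ⟨a, rfl⟩ := Submodule.Quotient.mk_surjective _ q
        refine ⟨Submodule.Quotient.mk (Function.update 0 i a), ?_⟩
        change Submodule.Quotient.mk (Function.update (0 : A O s n) i a i) = _
        rw [Function.update_self]
    · intro y hy
      rw [hx, Ideal.span_singleton_pow, Ideal.mem_span_singleton'] at hy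
      obtain ⟨c, rfl⟩ := hy
      refine ⟨c * ψ O s n T i x ^ r, ?_, by ring⟩
      rw [hx, Ideal.span_singleton_pow, Ideal.mem_span_singleton']
      exact ⟨c, rfl⟩
  simp_rw [hi]
  letI (i : Fin s) : Algebra T (Ti O s n T i) := (ψ O s n T i).toRingHom.toAlgebra
  letI (i : Fin s) : Module T (Fin (n i) → O) := Module.compHom _ (ψ O s n T i).toRingHom
  haveI (i : Fin s) : IsScalarTower T (Ti O s n T i) (Fin (n i) → O) :=
    ⟨fun a b c => mul_smul (ψ O s n T i a) b c⟩
  let e : A O s n ≃ₗ[T] (∀ i, (Fin (n i) → O)) :=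
    { AddEquiv.refl _ with map_smul' := fun a b => rfl }
  rw [sum_aux (fun i => Ti O s n T i) (fun i => Fin (n i) → O) (fun i => ψ_surj O s n T i) e x]
  rw [WithBot.coe_sum]
  rfl

end Stmt3
end
end

section
/- (Corollary 2.7.) Assume that the residue field F_ϖ of O has at least s elements (equivalently #F_ϖ^× ≥ s−1) and that each ideal J_i ⊆ T_i is principal. Then e(J,T) = ∑_{i=1}^s length_{T_i}(T_i/J_i). Concretely: for all sufficiently large natural numbers r, the length of J^r/J^{r+1} as a T-module equals the sum over i = 1,…,s of the lengths of T_i/J_i as T_i-modules. -/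
/-!
Setting: `O` is the valuation ring of a finite extension of `ℚ_p`, abstracted as a complete
discrete valuation ring with finite residue field of characteristic `p`.
`A = ∏ i, O^(n i)`, `T ⊆ A` a local complete `O`-subalgebra of full rank (`A/T` finite),
`J ⊆ T` an ideal of finite index, `T_i = φ_i(T)`, `J_i = φ_i(J)`.
-/

open IsLocalRing

set_option synthInstance.maxHeartbeats 1000000
set_option maxHeartbeats 1000000

noncomputable section

namespace Stmt4

variable (p : ℕ) [Fact (Nat.Prime p)]
variable (O : Type) [CommRing O] [IsDomain O] [IsDiscreteValuationRing O]
variable (s : ℕ) (n : Fin s → ℕ)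

/-- The ambient algebra `A = ∏_{i=1}^s O^{n_i}`. -/
abbrev A : Type := ∀ i : Fin s, Fin (n i) → O

/-- The canonical projection `φ_i : A → A_i = O^{n_i}`. -/
def φ (i : Fin s) : A O s n →ₐ[O] (Fin (n i) → O) :=
  Pi.evalAlgHom O (fun i => Fin (n i) → O) i

variable (T : Subalgebra O (A O s n))

/-- `T_i = φ_i(T)`. -/
def Ti (i : Fin s) : Subalgebra O (Fin (n i) → O) := T.map (φ O s n i)

/-- The projection `T → T_i` induced by `φ_i`. -/
def ψ (i : Fin s) : T →ₐ[O] Ti O s n T i :=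
  AlgHom.codRestrict ((φ O s n i).comp T.val) (Ti O s n T i)
    (fun x => ⟨x.1, x.2, rfl⟩)

/-- `J_i = φ_i(J)`, as an ideal of `T_i`. -/
def Ji (J : Ideal T) (i : Fin s) : Ideal (Ti O s n T i) :=
  J.map (ψ O s n T i)

/-- The natural inclusion `T → ∏_{i=1}^s T_i`. -/
def Ψ : T →ₐ[O] ∀ i, Ti O s n T i :=
  Pi.algHom O _ (fun i => ψ O s n T i)

/-- The ideal `∏_{i=1}^s J_i` of the product ring `∏_{i=1}^s T_i`, consisting of the tuples
whose `i`-th entry lies in `J_i`. -/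
def prodIdeal (J : Ideal T) : Ideal (∀ i, Ti O s n T i) where
  carrier := {x | ∀ i, x i ∈ Ji O s n T J i}
  add_mem' hx hy i := (Ji O s n T _ i).add_mem (hx i) (hy i)
  zero_mem' i := (Ji O s n T _ i).zero_mem
  smul_mem' c x hx i := (Ji O s n T _ i).smul_mem (c i) (hx i)

/-- The length of a module: the Krull dimension of its lattice of submodules. -/
def moduleLength (R M : Type*) [Semiring R] [AddCommMonoid M] [Module R M] : WithBot ℕ∞ :=
  Order.krullDim (Submodule R M)

/-- The Hilbert–Samuel function `r ↦ length_T (J^r / J^(r+1))` of an ideal `J` of a ring `T`. -/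
def hilbertSamuel {T : Type*} [CommRing T] (J : Ideal T) (r : ℕ) : WithBot ℕ∞ :=
  moduleLength T (↥(J ^ r) ⧸ Submodule.comap (J ^ r).subtype (J ^ (r + 1)))

section Helpers

open Submodule

variable {R : Type*} [CommRing R] {M M' : Type*} [AddCommGroup M] [Module R M]
  [AddCommGroup M'] [Module R M']

/-- Relative length of `P / (N ∩ P)`. -/
noncomputable def relLen (N P : Submodule R M) : ℕ∞ :=
  Module.length R (↥P ⧸ Submodule.comap P.subtype N)

lemma relLen_eq (N P : Submodule R M) (g : P →ₗ[R] M') (hg : Function.Surjective g)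
    (hk : ∀ x : P, g x = 0 ↔ (x : M) ∈ N) : relLen N P = Module.length R M' := by
  have h : Submodule.comap P.subtype N = LinearMap.ker g := by
    ext x
    simp [hk]
  unfold relLen
  rw [h]
  exact (g.quotKerEquivOfSurjective hg).length_eq

lemma relLen_map (f : M →ₗ[R] M') (hf : Function.Injective f) (N P : Submodule R M) :
    relLen (N.map f) (P.map f) = relLen N P := by
  symm
  refine relLen_eq N P ((Submodule.mkQ _).comp (f.submoduleMap P)) ?_ ?_
  · exact (Submodule.mkQ_surjective _).comp (f.submoduleMap_surjective P)
  · intro x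
    simp only [LinearMap.comp_apply, Submodule.mkQ_apply, Submodule.Quotient.mk_eq_zero,
      Submodule.mem_comap, Submodule.subtype_apply, LinearMap.submoduleMap_coe_apply]
    constructor
    · rintro ⟨y, hy, h⟩
      rw [← hf h]; exact hy
    · intro h
      exact ⟨x, h, rfl⟩

lemma relLen_anti {N N' : Submodule R M} (h : N ≤ N') (P : Submodule R M) :
    relLen N' P ≤ relLen N P := by
  unfold relLen
  exact Module.length_le_of_surjective
    (Submodule.factor (Submodule.comap_mono h)) (Submodule.factor_surjective _)

lemma relLen_add {N P Q : Submodule R M} (h1 : N ≤ P) (h2 : P ≤ Q) :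
    relLen N Q = relLen N P + relLen P Q := by
  unfold relLen
  have hc1 : Submodule.comap P.subtype N ≤
      Submodule.comap (Submodule.inclusion h2) (Submodule.comap Q.subtype N) := fun x hx => hx
  have hc2 : Submodule.comap Q.subtype N ≤ Submodule.comap Q.subtype P := Submodule.comap_mono h1
  refine Module.length_eq_add_of_exact
    (Submodule.mapQ (Submodule.comap P.subtype N) (Submodule.comap Q.subtype N)
      (Submodule.inclusion h2) hc1)
    (Submodule.factor hc2) ?_ (Submodule.factor_surjective _) ?_
  · rw [← LinearMap.ker_eq_bot, LinearMap.ker_eq_bot']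
    intro x
    obtain ⟨x, rfl⟩ := Submodule.mkQ_surjective _ x
    simp only [Submodule.mkQ_apply, Submodule.mapQ_apply, Submodule.Quotient.mk_eq_zero]
    exact fun h => h
  · intro x
    obtain ⟨x, rfl⟩ := Submodule.mkQ_surjective _ x
    refine (Submodule.Quotient.mk_eq_zero (Submodule.comap Q.subtype P) (x := x)).trans ?_
    constructor
    · intro h
      exact ⟨Submodule.Quotient.mk ⟨x, h⟩, rfl⟩
    · rintro ⟨y, hy⟩
      obtain ⟨y, rfl⟩ := Submodule.mkQ_surjective _ y
      simp only [Submodule.mkQ_apply, Submodule.mapQ_apply] at hy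
      rw [Submodule.Quotient.eq] at hy
      have h3 : (y : M) - x ∈ N := hy
      have := P.sub_mem y.2 (h1 h3)
      simpa using this

lemma abstract_hs {S B : Type*} [CommRing S] [CommRing B] [Algebra S B]
    (hinj : Function.Injective (algebraMap S B)) (J : Ideal S) (x : S) (hx : x ∈ J)
    (hmap : J.map (algebraMap S B) = Ideal.span {algebraMap S B x})
    (hreg : ∀ b : B, algebraMap S B x * b = 0 → b = 0)
    (hfin : Finite (B ⧸ LinearMap.range (Algebra.linearMap S B))) :
    ∃ r₀ : ℕ, ∀ r : ℕ, r₀ ≤ r →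
      Module.length S (↥(J ^ r) ⧸ Submodule.comap (J ^ r).subtype (J ^ (r + 1))) =
      Module.length S (B ⧸ (Ideal.span {algebraMap S B x}).restrictScalars S) := by
  classical
  set μ : B →ₗ[S] B := LinearMap.lsmul S B x with hμ
  have hμa : ∀ b, μ b = algebraMap S B x * b := fun b => by
    simp [hμ, Algebra.smul_def]
  have hμi : Function.Injective μ := by
    rw [← LinearMap.ker_eq_bot, LinearMap.ker_eq_bot']
    intro b hb
    exact hreg b (by rw [← hμa, hb])
  let N : ℕ → Submodule S B := fun r => Submodule.map (Algebra.linearMap S B) (J ^ r)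
  let P : ℕ → Submodule S B := fun r => ((Ideal.span {algebraMap S B x}) ^ r).restrictScalars S
  have hNP : ∀ r, N r ≤ P r := by
    rintro r _ ⟨y, hy, rfl⟩
    change algebraMap S B y ∈ Ideal.span {algebraMap S B x} ^ r
    rw [← hmap, ← Ideal.map_pow]
    exact Ideal.mem_map_of_mem _ hy
  have hP : ∀ r, P (r + 1) = (P r).map μ := by
    intro r
    ext b
    simp only [P, Ideal.span_singleton_pow, Submodule.restrictScalars_mem,
      Ideal.mem_span_singleton', Submodule.mem_map, hμa]
    constructor
    · rintro ⟨a, rfl⟩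
      exact ⟨_, ⟨a, rfl⟩, by ring⟩
    · rintro ⟨_, ⟨a, rfl⟩, rfl⟩
      exact ⟨a, by ring⟩
  have hN : ∀ r, (N r).map μ ≤ N (r + 1) := by
    rintro r _ ⟨_, ⟨y, hy, rfl⟩, rfl⟩
    refine ⟨x * y, ?_, ?_⟩
    · rw [pow_succ']; exact Ideal.mul_mem_mul hx hy
    · simp [hμa]
  have hNs : ∀ r, N (r + 1) ≤ N r := fun r => Submodule.map_mono (Ideal.pow_le_pow_right (Nat.le_succ r))
  have hPs : ∀ r, P (r + 1) ≤ P r := fun r b hb => Ideal.pow_le_pow_right (Nat.le_succ r) hb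
  let c : ℕ → ℕ∞ := fun r => relLen (N r) (P r)
  have hc : Antitone c := by
    refine antitone_nat_of_succ_le fun r => ?_
    change relLen (N (r+1)) (P (r+1)) ≤ relLen (N r) (P r)
    rw [← relLen_map μ hμi (N r) (P r), ← hP]
    exact relLen_anti (hN r) _
  have hc0 : c 0 ≠ ⊤ := by
    have : c 0 = Module.length S (B ⧸ LinearMap.range (Algebra.linearMap S B)) := by
      refine relLen_eq _ _ ((Submodule.mkQ _).comp (P 0).subtype) ?_ ?_
      · intro b
        obtain ⟨b, rfl⟩ := Submodule.mkQ_surjective _ b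
        exact ⟨⟨b, by simp [P]⟩, rfl⟩
      · intro b
        simp [N, Submodule.map_top]
    rw [this]
    exact Module.length_ne_top
  have hct : ∀ r, c r ≠ ⊤ := fun r => ne_top_of_le_ne_top hc0 (hc (Nat.zero_le r))
  obtain ⟨r₀, hr₀⟩ : ∃ r₀, ∀ r, r₀ ≤ r → c r = c r₀ := by
    obtain ⟨m, ⟨r₀, rfl⟩, hm⟩ := WellFounded.has_min (wellFounded_lt (α := ℕ∞)) (Set.range c) ⟨_, 0, rfl⟩
    exact ⟨r₀, fun r hr => le_antisymm (hc hr) (not_lt.mp (hm _ ⟨r, rfl⟩))⟩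
  have hPr : ∀ r, relLen (P (r + 1)) (P r) =
      Module.length S (B ⧸ (Ideal.span {algebraMap S B x}).restrictScalars S) := by
    intro r
    induction r with
    | zero =>
      refine relLen_eq _ _ ((Submodule.mkQ _).comp (P 0).subtype) ?_ ?_
      · intro b
        obtain ⟨b, rfl⟩ := Submodule.mkQ_surjective _ b
        exact ⟨⟨b, by simp [P]⟩, rfl⟩
      · intro b
        simp [P]
    | succ r ih =>
      rw [← ih, ← relLen_map μ hμi (P (r + 1)) (P r), ← hP, ← hP]
  refine ⟨r₀, fun r hr => ?_⟩
  have e1 : relLen (N (r + 1)) (P r) = relLen (N (r+1)) (N r) + c r := relLen_add (hNs r) (hNP r)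
  have e2 : relLen (N (r + 1)) (P r) = c (r+1) + relLen (P (r+1)) (P r) :=
    relLen_add (hNP (r+1)) (hPs r)
  have e3 : relLen (N (r+1)) (N r) = relLen (J ^ (r+1)) (J ^ r) :=
    relLen_map (Algebra.linearMap S B) hinj _ _
  rw [hPr, e1, hr₀ (r+1) (by omega), hr₀ r hr, add_comm, e3] at e2
  exact ENat.add_right_injective_of_ne_top (hct r₀) e2

lemma length_prod_quot {S : Type*} [CommRing S] {ι : Type*} [Fintype ι] (Q : ι → Type*)
    [∀ i, CommRing (Q i)] [∀ i, Algebra S (Q i)]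
    (hsurj : ∀ i, Function.Surjective (algebraMap S (Q i))) (x : ∀ i, Q i) (I : ∀ i, Ideal (Q i))
    (hI : ∀ i, I i = Ideal.span {x i}) :
    Module.length S ((∀ i, Q i) ⧸ (Ideal.span {x}).restrictScalars S) =
      ∑ i, Module.length (Q i) (Q i ⧸ I i) := by
  classical
  have h1 : (Ideal.span {x}).restrictScalars S =
      Submodule.pi Set.univ (fun i => (I i).restrictScalars S) := by
    ext y
    simp only [Submodule.restrictScalars_mem, Submodule.mem_pi, hI, Ideal.mem_span_singleton']
    constructor
    · rintro ⟨a, rfl⟩ i _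
      exact ⟨a i, rfl⟩
    · intro h
      choose a ha using fun i => h i (Set.mem_univ i)
      exact ⟨a, funext ha⟩
  rw [h1, (Submodule.quotientPi (fun i => (I i).restrictScalars S)).length_eq,
    Module.length_pi_of_fintype]
  refine Finset.sum_congr rfl fun i _ => ?_
  rw [← Module.length_eq_of_surjective (M := Q i ⧸ I i) (hsurj i)]
  exact (Submodule.Quotient.restrictScalarsEquiv S (I i)).length_eq

/-- Avoidance: simultaneous choice. -/
lemma avoid {O S : Type*} [CommRing O] [IsLocalRing O] [CommRing S] [Algebra O S]
    [Finite (IsLocalRing.ResidueField O)] {ι : Type*} [DecidableEq ι]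
    (J : Ideal S) (N : ι → Ideal S)
    (h : ∀ i, ∃ y ∈ J, y ∉ N i) (t : Finset ι)
    (ht : t.card ≤ Nat.card (IsLocalRing.ResidueField O)) :
    ∃ x ∈ J, ∀ i ∈ t, x ∉ N i := by
  induction t using Finset.induction_on with
  | empty => exact ⟨0, J.zero_mem, by simp⟩
  | insert i t hi ih =>
    rw [Finset.card_insert_of_notMem hi] at ht
    obtain ⟨x, hxJ, hx⟩ := ih (by omega)
    by_cases hxi : x ∈ N i
    swap
    · refine ⟨x, hxJ, fun j hj => ?_⟩
      rcases Finset.mem_insert.mp hj with rfl | hj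
      · exact hxi
      · exact hx j hj
    obtain ⟨y, hyJ, hy⟩ := h i
    obtain ⟨σ, hσ⟩ := (IsLocalRing.residue_surjective (R := O)).hasRightInverse
    by_contra hcon
    push Not at hcon
    have key : ∀ c : IsLocalRing.ResidueField O, ∃ j ∈ t, y + σ c • x ∈ N j := by
      intro c
      obtain ⟨j, hj, hjN⟩ := hcon (y + σ c • x)
        (J.add_mem hyJ (by rw [Algebra.smul_def]; exact J.mul_mem_left _ hxJ))
      rcases Finset.mem_insert.mp hj with rfl | hj
      · refine absurd ?_ hy
        have h2 : σ c • x ∈ N j := by rw [Algebra.smul_def]; exact (N j).mul_mem_left _ hxi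
        simpa using (N j).sub_mem hjN h2
      · exact ⟨j, hj, hjN⟩
    choose F hF hFN using key
    have hFinj : Function.Injective (fun c => (⟨F c, hF c⟩ : t)) := by
      intro c d hcd
      by_contra hne
      have hcd' : F c = F d := congrArg Subtype.val hcd
      have h3 := (N (F d)).sub_mem (hcd' ▸ hFN c) (hFN d)
      have h4 : algebraMap O S (σ c - σ d) * x ∈ N (F d) := by
        convert h3 using 1
        rw [Algebra.smul_def, Algebra.smul_def, map_sub]; ring
      have hu : IsUnit (σ c - σ d) := by
        by_contra hnu
        have : IsLocalRing.residue O (σ c - σ d) = 0 := by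
          rw [IsLocalRing.residue_eq_zero_iff]; exact hnu
        rw [map_sub, hσ, hσ, sub_eq_zero] at this
        exact hne this
      exact hx _ (hF d) (((N (F d)).unit_mul_mem_iff_mem (hu.map (algebraMap O S))).mp h4)
    have := Nat.card_le_card_of_injective _ hFinj
    rw [Nat.card_eq_fintype_card (α := t), Fintype.card_coe] at this
    omega

end Helpers

/-- (Corollary 2.7.)  If the residue field of `O` has at least `s` elements and each
`J_i ⊆ T_i` is principal, then `e(J, T) = ∑ i, length_{T_i} (T_i/J_i)`: for all sufficiently
large `r`, `length_T (J^r/J^(r+1)) = ∑ i, length_{T_i} (T_i/J_i)`. -/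
theorem statement
    -- `O` is the valuation ring of a finite extension of `ℚ_p`:
    [IsAdicComplete (maximalIdeal O) O] [Finite (ResidueField O)]
    [CharP (ResidueField O) p]
    (hs : 0 < s) (hn : ∀ i, 0 < n i)
    -- `T` is a local complete `O`-subalgebra of full rank in `A`:
    [IsLocalRing T] [IsAdicComplete (maximalIdeal T) T]
    (hfullrank : Finite ((A O s n) ⧸ T.toSubmodule))
    -- `J ⊆ T` is an ideal of finite index:
    (J : Ideal T) (hJ : Finite (T ⧸ J))
    -- the residue field of `O` has at least `s` elements:
    (hres : s ≤ Nat.card (ResidueField O))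
    -- each `J_i` is principal:
    (hprin : ∀ i, (Ji O s n T J i).IsPrincipal) :
    ∃ r₀ : ℕ, ∀ r : ℕ, r₀ ≤ r →
      hilbertSamuel J r =
        ∑ i, moduleLength (Ti O s n T i) ((Ti O s n T i) ⧸ (Ji O s n T J i)) := by
  classical
  have hψsurj : ∀ i, Function.Surjective (ψ O s n T i) := by
    rintro i ⟨_, y, hy, rfl⟩
    exact ⟨⟨y, hy⟩, rfl⟩
  have hJmem : ∀ i (z : Ti O s n T i), z ∈ Ji O s n T J i → ∃ y ∈ J, ψ O s n T i y = z := by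
    intro i z hz
    exact (Ideal.mem_map_iff_of_surjective (ψ O s n T i) (hψsurj i)).mp hz
  have hJmem' : ∀ i, ∀ y ∈ J, ψ O s n T i y ∈ Ji O s n T J i :=
    fun i y hy => Ideal.mem_map_of_mem _ hy
  have hnt : ∀ i, Nontrivial (Ti O s n T i) := by
    intro i
    haveI : Nonempty (Fin (n i)) := ⟨⟨0, hn i⟩⟩
    infer_instance
  have hloc : ∀ i, IsLocalRing (Ti O s n T i) := fun i =>
    haveI := hnt i
    IsLocalRing.of_surjective' (ψ O s n T i : T →+* Ti O s n T i) (hψsurj i)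
  have hOinf : Infinite O := by
    by_contra hfin
    rw [not_infinite_iff_finite] at hfin
    exact IsDiscreteValuationRing.not_isField O (Finite.isField_of_domain O)
  -- finiteness of `T_i / J_i`
  have hfinq : ∀ i, Finite (Ti O s n T i ⧸ Ji O s n T J i) := by
    intro i
    refine Finite.of_surjective (Ideal.quotientMap (Ji O s n T J i) (ψ O s n T i : T →+* Ti O s n T i)
      (I := J) (fun y hy => hJmem' i y hy)) ?_
    exact Ideal.quotientMap_surjective (hψsurj i)
  -- each coordinate is nonzero on some element of `J_i`
  have hcoord : ∀ i (j : Fin (n i)), ¬ ∀ z ∈ Ji O s n T J i, z.1 j = 0 := by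
    intro i j hz
    haveI := hfinq i
    refine not_injective_infinite_finite
      (fun a : O => (Ideal.Quotient.mk (Ji O s n T J i) (algebraMap O (Ti O s n T i) a))) ?_
    intro a b hab
    have h1 := hz _ (Ideal.Quotient.eq.mp hab)
    have h2 : a - b = 0 := h1
    exact sub_eq_zero.mp h2
  choose g hg using fun i => (hprin i).principal
  have hg' : ∀ i, Ji O s n T J i = Ideal.span {g i} := hg
  have hex : ∀ i, ∃ y ∈ J, y ∉ Ideal.comap (ψ O s n T i)
      (@maximalIdeal _ _ (hloc i) * Ji O s n T J i) := by
    intro i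
    haveI := hloc i
    have hgi : g i ∈ Ji O s n T J i := by
      rw [hg']; exact Ideal.mem_span_singleton_self _
    obtain ⟨y, hy, hyg⟩ := hJmem i (g i) hgi
    refine ⟨y, hy, fun hmem => ?_⟩
    rw [Ideal.mem_comap, hyg, hg', mul_comm, Ideal.mem_span_singleton_mul] at hmem
    obtain ⟨m, hm, hmg⟩ := hmem
    have hu : IsUnit (1 - m) := by
      by_contra hnu
      have h1 := (maximalIdeal (Ti O s n T i)).add_mem ((mem_maximalIdeal _).mpr hnu) hm
      rw [sub_add_cancel] at h1
      exact (Ideal.ne_top_iff_one _).mp (maximalIdeal.isMaximal _).ne_top h1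
    have h0 : g i = 0 := by
      have : (1 - m) * g i = 0 := by rw [sub_mul, one_mul, mul_comm m, hmg, sub_self]
      exact (hu.mul_right_eq_zero).mp this
    refine hcoord i ⟨0, hn i⟩ fun z hz => ?_
    rw [hg', h0, Ideal.mem_span_singleton'] at hz
    obtain ⟨a, rfl⟩ := hz
    simp
  obtain ⟨x, hxJ, hx⟩ := avoid (O := O) J _ hex Finset.univ (by simpa using hres)
  have hxgen : ∀ i, Ji O s n T J i = Ideal.span {ψ O s n T i x} := by
    intro i
    haveI := hloc i
    have h1 := hJmem' i x hxJ
    rw [hg', Ideal.mem_span_singleton'] at h1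
    obtain ⟨u, hu⟩ := h1
    have huu : IsUnit u := by
      by_contra hnu
      refine hx i (Finset.mem_univ i) ?_
      rw [Ideal.mem_comap, ← hu]
      refine Ideal.mul_mem_mul ((mem_maximalIdeal _).mpr hnu) ?_
      rw [hg']; exact Ideal.mem_span_singleton_self _
    rw [hg', ← hu, Ideal.span_singleton_mul_left_unit huu]
  have hxne : ∀ i (j : Fin (n i)), (ψ O s n T i x).1 j ≠ 0 := by
    intro i j h0
    refine hcoord i j fun z hz => ?_
    rw [hxgen, Ideal.mem_span_singleton'] at hz
    obtain ⟨a, rfl⟩ := hz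
    change a.1 j * (ψ O s n T i x).1 j = 0
    rw [h0, mul_zero]
  letI alg : ∀ i, Algebra T (Ti O s n T i) := fun i =>
    (ψ O s n T i : T →+* Ti O s n T i).toAlgebra
  have halg : ∀ (y : T) (i), algebraMap T (∀ i, Ti O s n T i) y i = ψ O s n T i y :=
    fun y i => rfl
  have hinj : Function.Injective (algebraMap T (∀ i, Ti O s n T i)) := by
    intro a b hab
    apply Subtype.ext
    funext i
    have h1 := congrFun hab i
    exact congrArg Subtype.val h1
  have hmap : J.map (algebraMap T (∀ i, Ti O s n T i)) =
      Ideal.span {algebraMap T (∀ i, Ti O s n T i) x} := by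
    apply le_antisymm
    · rw [Ideal.map_le_iff_le_comap]
      intro y hy
      rw [Ideal.mem_comap, Ideal.mem_span_singleton']
      have h1 : ∀ i, ∃ a, a * ψ O s n T i x = ψ O s n T i y := fun i => by
        have := hJmem' i y hy
        rwa [hxgen, Ideal.mem_span_singleton'] at this
      choose a ha using h1
      exact ⟨a, funext ha⟩
    · rw [Ideal.span_singleton_le_iff_mem]
      exact Ideal.mem_map_of_mem _ hxJ
  have hreg : ∀ b : (∀ i, Ti O s n T i), algebraMap T (∀ i, Ti O s n T i) x * b = 0 → b = 0 := by
    intro b hb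
    funext i
    apply Subtype.ext
    funext j
    have h1 : (ψ O s n T i x).1 j * (b i).1 j = 0 :=
      congrFun (congrArg Subtype.val (congrFun hb i)) j
    exact (mul_eq_zero.mp h1).resolve_left (hxne i j)
  have hfin : Finite ((∀ i, Ti O s n T i) ⧸
      LinearMap.range (Algebra.linearMap T (∀ i, Ti O s n T i))) := by
    let f : (∀ i, Ti O s n T i) → A O s n := fun b i => (b i).1
    refine Finite.of_injective (β := (A O s n) ⧸ T.toSubmodule)
      (fun q => Submodule.Quotient.mk (f (Quotient.out q))) ?_
    intro q q' hqq
    have h1 := (Submodule.Quotient.eq _).mp hqq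
    rw [← Quotient.out_eq q, ← Quotient.out_eq q']
    refine (Submodule.Quotient.eq _).mpr ?_
    refine ⟨⟨_, h1⟩, ?_⟩
    funext i
    apply Subtype.ext
    rfl
  obtain ⟨r₀, hr₀⟩ := abstract_hs hinj J x hxJ hmap hreg hfin
  refine ⟨r₀, fun r hr => ?_⟩
  have h1 := hr₀ r hr
  rw [length_prod_quot (S := T) (fun i => Ti O s n T i) (fun i => hψsurj i)
    (algebraMap T (∀ i, Ti O s n T i) x)
    (fun i => Ji O s n T J i) (fun i => hxgen i)] at h1
  unfold hilbertSamuel moduleLength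
  simp only [← Module.coe_length]
  rw [h1]
  exact map_sum WithBot.addHom _ _

end Stmt4
end
end
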